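/- arXiv:2605.06062 — 4 statements merged into one kernel-verified Lean document; each statement's English description precedes it below -/
import Mathlib

section
/- Consider the full persistent-surveillance system and the per-part subsystems. Let S be the maximal invariant subset of D for the full system and S_i the maximal invariant subset of D_i for the i-th per-part subsystem. Then for every (x, z, u) ∈ S and every index i : Fin N, one has (x, z i, u) ∈ S_i; i.e. S ⊆ Ŝ where Ŝ := {(x, z, u) ∈ D | ∀ i, (x, z i, u) ∈ S_i}. Consequently the compositional monitor is complete: any state flagged by some per-part invariant check is also outside the full-system invariant. -/
/-!
The projection `(x, z, u) ↦ (x, z i, u)` maps an invariant subset of the full constraint set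
to an invariant subset of the `i`-th one. Indeed, any successor in the subsystem, given by a
factor `g` for part `i` and an input `u'`, lifts to a successor in the full system: the factors
of the other parts can be chosen independently, and their factor sets are nonempty
(`Gamma_nonempty`).
-/

/-- A set `A` is (robust positively) invariant for the set-valued successor map `F`. -/
def Invariant {α : Type*} (F : α → Set α) (A : Set α) : Prop :=
  ∀ s ∈ A, F s ⊆ A

/-- The maximal invariant subset of `D`: the union of all invariant subsets of `D`. -/
def maxInv {α : Type*} (F : α → Set α) (D : Set α) : Set α :=
  ⋃₀ {A : Set α | A ⊆ D ∧ Invariant F A}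

/-- Region-dependent LPV factor set: decay interval when `x` is in the observation
region of part `i`, growth interval otherwise. -/
noncomputable def Gamma {N : ℕ} (Obs : Fin N → Set (ℝ × ℝ))
    (aMin aMax bMin bMax : Fin N → ℝ) (i : Fin N) (x : ℝ × ℝ) : Set ℝ :=
  open Classical in
  if x ∈ Obs i then Set.Icc (aMin i) (aMax i) else Set.Icc (bMin i) (bMax i)

/-- Successor map of the full persistent-surveillance system on state–input vectors
`(x, z, u) ∈ ℝ² × (Fin N → ℝ) × ℝ²`. -/
def Ffull {N : ℕ} (Ts : ℝ) (U : Set (ℝ × ℝ)) (Obs : Fin N → Set (ℝ × ℝ))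
    (aMin aMax bMin bMax : Fin N → ℝ)
    (s : (ℝ × ℝ) × (Fin N → ℝ) × (ℝ × ℝ)) :
    Set ((ℝ × ℝ) × (Fin N → ℝ) × (ℝ × ℝ)) :=
  {p | ∃ z' : Fin N → ℝ, ∃ u' ∈ U, ∃ γ : Fin N → ℝ,
    (∀ i, γ i ∈ Gamma Obs aMin aMax bMin bMax i s.1) ∧
    (∀ i, z' i = γ i * s.2.1 i) ∧
    p = (s.1 + Ts • s.2.2, z', u')}

/-- Successor map of the `i`-th per-part subsystem on `(x, zᵢ, u) ∈ ℝ² × ℝ × ℝ²`. -/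
def Fsub {N : ℕ} (Ts : ℝ) (U : Set (ℝ × ℝ)) (Obs : Fin N → Set (ℝ × ℝ))
    (aMin aMax bMin bMax : Fin N → ℝ) (i : Fin N)
    (s : (ℝ × ℝ) × ℝ × (ℝ × ℝ)) : Set ((ℝ × ℝ) × ℝ × (ℝ × ℝ)) :=
  {p | ∃ u' ∈ U, ∃ γ ∈ Gamma Obs aMin aMax bMin bMax i s.1,
    p = (s.1 + Ts • s.2.2, γ * s.2.1, u')}

/-- Constraint set of the full system. -/
def Dfull {N : ℕ} (X U : Set (ℝ × ℝ)) (zcrit : Fin N → ℝ) :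
    Set ((ℝ × ℝ) × (Fin N → ℝ) × (ℝ × ℝ)) :=
  {s | s.1 ∈ X ∧ (∀ i, s.2.1 i ∈ Set.Icc (0 : ℝ) (zcrit i)) ∧ s.2.2 ∈ U}

/-- Constraint set of a per-part subsystem with critical threshold `zc`. -/
def Dsub (X U : Set (ℝ × ℝ)) (zc : ℝ) : Set ((ℝ × ℝ) × ℝ × (ℝ × ℝ)) :=
  {s | s.1 ∈ X ∧ s.2.1 ∈ Set.Icc (0 : ℝ) zc ∧ s.2.2 ∈ U}

theorem Gamma_nonempty {N : ℕ} (Obs : Fin N → Set (ℝ × ℝ))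
    (aMin aMax bMin bMax : Fin N → ℝ)
    (haMinMax : ∀ i, aMin i ≤ aMax i) (hbMinMax : ∀ i, bMin i ≤ bMax i)
    (x : ℝ × ℝ) (i : Fin N) : (Gamma Obs aMin aMax bMin bMax i x).Nonempty := by
  unfold Gamma
  split_ifs
  · exact Set.nonempty_Icc.2 (haMinMax i)
  · exact Set.nonempty_Icc.2 (hbMinMax i)

/-- Completeness of the compositional monitor: every element of the full-system maximal
robust positively invariant set `S` lies, for each part `i`, in the `i`-th per-part
maximal invariant set; i.e. `S ⊆ Ŝ`. -/
theorem full_rpi_subset_compositional_rpi (N : ℕ) (Ts : ℝ) (hTs : 0 < Ts)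
    (X U : Set (ℝ × ℝ)) (Obs : Fin N → Set (ℝ × ℝ))
    (zcrit aMin aMax bMin bMax : Fin N → ℝ)
    (hzcrit : ∀ i, 0 < zcrit i)
    (haMin : ∀ i, 0 < aMin i) (haMinMax : ∀ i, aMin i ≤ aMax i)
    (hbMin : ∀ i, 0 < bMin i) (hbMinMax : ∀ i, bMin i ≤ bMax i) :
    maxInv (Ffull Ts U Obs aMin aMax bMin bMax) (Dfull X U zcrit) ⊆
    {s : (ℝ × ℝ) × (Fin N → ℝ) × (ℝ × ℝ) | s ∈ Dfull X U zcrit ∧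
      ∀ i : Fin N, (s.1, s.2.1 i, s.2.2) ∈
        maxInv (Fsub Ts U Obs aMin aMax bMin bMax i) (Dsub X U (zcrit i))} := by
  rintro s ⟨A, ⟨hAD, hA⟩, hs⟩
  refine ⟨hAD hs, fun i => ⟨(fun t => (t.1, t.2.1 i, t.2.2)) '' A, ⟨?_, ?_⟩, s, hs, rfl⟩⟩
  · rintro _ ⟨t, ht, rfl⟩
    exact ⟨(hAD ht).1, (hAD ht).2.1 i, (hAD ht).2.2⟩
  · rintro _ ⟨t, ht, rfl⟩ _ ⟨u', hu', g, hg, rfl⟩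
    choose γ hγ using Gamma_nonempty Obs aMin aMax bMin bMax haMinMax hbMinMax t.1
    -- The full-system factor is `g` in coordinate `i` and any admissible value elsewhere.
    refine ⟨(t.1 + Ts • t.2.2, fun j => Function.update γ i g j * t.2.1 j, u'),
      hA t ht ⟨_, u', hu', Function.update γ i g, fun j => ?_, fun _ => rfl, rfl⟩, by simp⟩
    rcases eq_or_ne j i with rfl | hj
    · simpa using hg
    · simpa [hj] using hγ j
end

section
/- Consider the full persistent-surveillance system and the per-part subsystems. Fix an index i : Fin N and let A ⊆ D be any invariant set for the full system (for every s ∈ A, Ffull s ⊆ A). Define the projection Π_i(A) := {(x, zi, u) | ∃ z : Fin N → ℝ, z i = zi ∧ (x, z, u) ∈ A}. Then Π_i(A) ⊆ D_i and Π_i(A) is invariant for the i-th per-part subsystem, i.e. for every (x, zi, u) ∈ Π_i(A), Fi (x, zi, u) ⊆ Π_i(A). -/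
/-- If `A ⊆ D` is invariant for the full system, then its projection
`Π_i(A) = {(x, zᵢ, u) | ∃ z, z i = zᵢ ∧ (x, z, u) ∈ A}` onto the `i`-th per-part state
space is contained in `D_i` and is invariant for the `i`-th per-part subsystem. -/
theorem projection_of_full_invariant_is_invariant (N : ℕ) (Ts : ℝ) (hTs : 0 < Ts)
    (X U : Set (ℝ × ℝ)) (Obs : Fin N → Set (ℝ × ℝ))
    (zcrit aMin aMax bMin bMax : Fin N → ℝ)
    (hzcrit : ∀ i, 0 < zcrit i)
    (haMin : ∀ i, 0 < aMin i) (haMinMax : ∀ i, aMin i ≤ aMax i)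
    (hbMin : ∀ i, 0 < bMin i) (hbMinMax : ∀ i, bMin i ≤ bMax i)
    (i : Fin N) (A : Set ((ℝ × ℝ) × (Fin N → ℝ) × (ℝ × ℝ)))
    (hAD : A ⊆ Dfull X U zcrit)
    (hInv : Invariant (Ffull Ts U Obs aMin aMax bMin bMax) A) :
    {p : (ℝ × ℝ) × ℝ × (ℝ × ℝ) | ∃ z : Fin N → ℝ, z i = p.2.1 ∧ (p.1, z, p.2.2) ∈ A}
      ⊆ Dsub X U (zcrit i) ∧
    Invariant (Fsub Ts U Obs aMin aMax bMin bMax i)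
      {p : (ℝ × ℝ) × ℝ × (ℝ × ℝ) | ∃ z : Fin N → ℝ, z i = p.2.1 ∧ (p.1, z, p.2.2) ∈ A} := by
  constructor
  · rintro ⟨x, zi, u⟩ ⟨z, hz, hA⟩
    obtain ⟨hx, hzD, hu⟩ := hAD hA
    refine ⟨hx, ?_, hu⟩
    rw [← hz]
    exact hzD i
  · rintro ⟨x, zi, u⟩ ⟨z, hz, hA⟩ p ⟨u', hu', γ, hγ, rfl⟩
    -- The factors of the other parts are arbitrary admissible ones; they exist because
    -- every factor interval is nonempty.
    have hne : ∀ j, ∃ g, g ∈ Gamma Obs aMin aMax bMin bMax j x := by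
      intro j
      unfold Gamma
      split_ifs
      · exact ⟨aMin j, le_rfl, haMinMax j⟩
      · exact ⟨bMin j, le_rfl, hbMinMax j⟩
    choose g hg using hne
    refine ⟨fun j => Function.update g i γ j * z j, ?_, ?_⟩
    · simpa using congrArg (γ * ·) hz
    · refine hInv _ hA ⟨_, u', hu', Function.update g i γ, ?_, fun _ => rfl, rfl⟩
      intro j
      rcases eq_or_ne j i with rfl | hj
      · simpa using hγ
      · simpa [hj] using hg j
end

section
/- Consider the i-th per-part subsystem with interval (LPV) uncertainty. If A ⊆ D_i is invariant for Fi (for every s ∈ A, Fi s ⊆ A), then its downward closure in the uncertainty coordinate, A↓ := {(x, zi', u) | ∃ zi, (x, zi, u) ∈ A ∧ 0 ≤ zi' ∧ zi' ≤ zi}, satisfies A↓ ⊆ D_i and A↓ is invariant for Fi. Consequently the maximal invariant subset S_i of D_i for Fi is downward closed in the uncertainty coordinate: if (x, zi, u) ∈ S_i and 0 ≤ zi' ≤ zi then (x, zi', u) ∈ S_i. -/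
/-- Region-dependent LPV factor set for one part: decay interval when `x` is in the
observation region, growth interval otherwise. -/
noncomputable def GammaPart (Obsi : Set (ℝ × ℝ)) (aMin aMax bMin bMax : ℝ)
    (x : ℝ × ℝ) : Set ℝ :=
  open Classical in
  if x ∈ Obsi then Set.Icc aMin aMax else Set.Icc bMin bMax

/-- Interval (LPV) successor map of the per-part subsystem on `(x, zᵢ, u) ∈ ℝ² × ℝ × ℝ²`. -/
def Fpart (Ts : ℝ) (U : Set (ℝ × ℝ)) (Obsi : Set (ℝ × ℝ)) (aMin aMax bMin bMax : ℝ)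
    (s : (ℝ × ℝ) × ℝ × (ℝ × ℝ)) : Set ((ℝ × ℝ) × ℝ × (ℝ × ℝ)) :=
  {p | ∃ u' ∈ U, ∃ γ ∈ GammaPart Obsi aMin aMax bMin bMax s.1,
    p = (s.1 + Ts • s.2.2, γ * s.2.1, u')}

/-- Worst-case vertex factor: `aMax` when observed, `bMax` otherwise. -/
noncomputable def cVert (Obsi : Set (ℝ × ℝ)) (aMax bMax : ℝ) (x : ℝ × ℝ) : ℝ :=
  open Classical in
  if x ∈ Obsi then aMax else bMax

/-- Worst-case vertex successor map of the per-part subsystem. -/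
noncomputable def Fvert (Ts : ℝ) (U : Set (ℝ × ℝ)) (Obsi : Set (ℝ × ℝ)) (aMax bMax : ℝ)
    (s : (ℝ × ℝ) × ℝ × (ℝ × ℝ)) : Set ((ℝ × ℝ) × ℝ × (ℝ × ℝ)) :=
  {p | ∃ u' ∈ U, p = (s.1 + Ts • s.2.2, cVert Obsi aMax bMax s.1 * s.2.1, u')}

/-- Per-part constraint set with critical threshold `zc`. -/
def Dpart (X U : Set (ℝ × ℝ)) (zc : ℝ) : Set ((ℝ × ℝ) × ℝ × (ℝ × ℝ)) :=
  {s | s.1 ∈ X ∧ s.2.1 ∈ Set.Icc (0 : ℝ) zc ∧ s.2.2 ∈ U}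

/-- Downward closure in the uncertainty coordinate. -/
def DownCl (A : Set ((ℝ × ℝ) × ℝ × (ℝ × ℝ))) : Set ((ℝ × ℝ) × ℝ × (ℝ × ℝ)) :=
  {p | ∃ zi : ℝ, (p.1, zi, p.2.2) ∈ A ∧ 0 ≤ p.2.1 ∧ p.2.1 ≤ zi}

/-- All admissible factors are positive, whether or not `x` is observed. -/
lemma GammaPart_pos {Obsi : Set (ℝ × ℝ)} {aMin aMax bMin bMax : ℝ}
    (haMin : 0 < aMin) (hbMin : 0 < bMin) {x : ℝ × ℝ} {γ : ℝ}
    (hγ : γ ∈ GammaPart Obsi aMin aMax bMin bMax x) : 0 < γ := by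
  unfold GammaPart at hγ
  split_ifs at hγ
  · exact haMin.trans_le hγ.1
  · exact hbMin.trans_le hγ.1

/-- The downward closure (in the uncertainty coordinate) of any invariant subset of `D_i`
is again an invariant subset of `D_i`; consequently the maximal invariant subset of `D_i`
is downward closed in the uncertainty coordinate. -/
theorem rpi_downward_closed (Ts : ℝ) (hTs : 0 < Ts)
    (X U Obsi : Set (ℝ × ℝ)) (zcrit aMin aMax bMin bMax : ℝ)
    (hzcrit : 0 < zcrit)
    (haMin : 0 < aMin) (haMinMax : aMin ≤ aMax)
    (hbMin : 0 < bMin) (hbMinMax : bMin ≤ bMax) :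
    (∀ A : Set ((ℝ × ℝ) × ℝ × (ℝ × ℝ)), A ⊆ Dpart X U zcrit →
      Invariant (Fpart Ts U Obsi aMin aMax bMin bMax) A →
      DownCl A ⊆ Dpart X U zcrit ∧
        Invariant (Fpart Ts U Obsi aMin aMax bMin bMax) (DownCl A)) ∧
    (∀ (x : ℝ × ℝ) (zi zi' : ℝ) (u : ℝ × ℝ),
      (x, zi, u) ∈ maxInv (Fpart Ts U Obsi aMin aMax bMin bMax) (Dpart X U zcrit) →
      0 ≤ zi' → zi' ≤ zi →
      (x, zi', u) ∈ maxInv (Fpart Ts U Obsi aMin aMax bMin bMax) (Dpart X U zcrit)) := by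
  have key : ∀ A : Set ((ℝ × ℝ) × ℝ × (ℝ × ℝ)), A ⊆ Dpart X U zcrit →
      Invariant (Fpart Ts U Obsi aMin aMax bMin bMax) A →
      DownCl A ⊆ Dpart X U zcrit ∧
        Invariant (Fpart Ts U Obsi aMin aMax bMin bMax) (DownCl A) := by
    intro A hAD hA
    constructor
    · rintro ⟨x, z', u⟩ ⟨z, hz, h0, hle⟩
      obtain ⟨hx, hzc, hu⟩ := hAD hz
      exact ⟨hx, ⟨h0, hle.trans hzc.2⟩, hu⟩
    · rintro ⟨x, z', u⟩ ⟨z, hz, h0, hle⟩ _ ⟨u', hu', γ, hγ, rfl⟩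
      have hpos := GammaPart_pos haMin hbMin hγ
      -- The factor set depends on `x` only, so `γ` is also admissible at the dominating state
      -- `(x, z, u)`, whose successor `γ * z` witnesses membership.
      exact ⟨γ * z, hA _ hz ⟨u', hu', γ, hγ, rfl⟩, mul_nonneg hpos.le h0,
        mul_le_mul_of_nonneg_left hle hpos.le⟩
  refine ⟨key, ?_⟩
  rintro x zi zi' u ⟨A, ⟨hAD, hA⟩, hmem⟩ h0 hle
  exact ⟨DownCl A, key A hAD hA, zi, hmem, h0, hle⟩
end

section
/- Consider the i-th per-part subsystem, with the interval (LPV) successor map Fi and the worst-case vertex successor map Fvert_i (x, zi, u) := {(x + Ts • u, c x * zi, u') | u' ∈ U}, where c x := aMax i if x ∈ Obs i and c x := bMax i otherwise. Let A be any set with A ⊆ {(x, zi, u) | 0 ≤ zi} that is downward closed in the uncertainty coordinate (if (x, zi, u) ∈ A and 0 ≤ zi' ≤ zi then (x, zi', u) ∈ A). Then A is invariant for Fi if and only if A is invariant for Fvert_i. -/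
theorem cVert_mem_GammaPart (Obsi : Set (ℝ × ℝ)) {aMin aMax bMin bMax : ℝ}
    (ha : aMin ≤ aMax) (hb : bMin ≤ bMax) (x : ℝ × ℝ) :
    cVert Obsi aMax bMax x ∈ GammaPart Obsi aMin aMax bMin bMax x := by
  unfold cVert GammaPart
  split_ifs
  · exact Set.right_mem_Icc.mpr ha
  · exact Set.right_mem_Icc.mpr hb

theorem nonneg_and_le_cVert_of_mem_GammaPart {Obsi : Set (ℝ × ℝ)} {aMin aMax bMin bMax : ℝ}
    (ha : 0 < aMin) (hb : 0 < bMin) {x : ℝ × ℝ} {γ : ℝ}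
    (hγ : γ ∈ GammaPart Obsi aMin aMax bMin bMax x) :
    0 ≤ γ ∧ γ ≤ cVert Obsi aMax bMax x := by
  unfold GammaPart at hγ
  unfold cVert
  split_ifs at hγ ⊢
  · exact ⟨ha.le.trans hγ.1, hγ.2⟩
  · exact ⟨hb.le.trans hγ.1, hγ.2⟩

/-- For a set `A` of states with nonnegative uncertainty coordinate that is downward
closed in the uncertainty coordinate, invariance for the interval (LPV) successor map
`Fpart` is equivalent to invariance for the worst-case vertex successor map `Fvert`. -/
theorem invariant_interval_iff_invariant_vertex (Ts : ℝ) (hTs : 0 < Ts)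
    (X U Obsi : Set (ℝ × ℝ)) (aMin aMax bMin bMax : ℝ)
    (haMin : 0 < aMin) (haMinMax : aMin ≤ aMax)
    (hbMin : 0 < bMin) (hbMinMax : bMin ≤ bMax)
    (A : Set ((ℝ × ℝ) × ℝ × (ℝ × ℝ)))
    (hpos : A ⊆ {p : (ℝ × ℝ) × ℝ × (ℝ × ℝ) | 0 ≤ p.2.1})
    (hdown : ∀ (x : ℝ × ℝ) (zi zi' : ℝ) (u : ℝ × ℝ),
      (x, zi, u) ∈ A → 0 ≤ zi' → zi' ≤ zi → (x, zi', u) ∈ A) :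
    Invariant (Fpart Ts U Obsi aMin aMax bMin bMax) A ↔
      Invariant (Fvert Ts U Obsi aMax bMax) A := by
  constructor
  · rintro h s hs _ ⟨u', hu', rfl⟩
    exact h s hs ⟨u', hu', _, cVert_mem_GammaPart Obsi haMinMax hbMinMax s.1, rfl⟩
  · rintro h s hs _ ⟨u', hu', γ, hγ, rfl⟩
    obtain ⟨hγ0, hγc⟩ := nonneg_and_le_cVert_of_mem_GammaPart haMin hbMin hγ
    have hz : 0 ≤ s.2.1 := hpos hs
    -- The interval successor lies below the vertex successor with the same next input.
    exact hdown _ _ _ _ (h s hs ⟨u', hu', rfl⟩) (mul_nonneg hγ0 hz)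
      (mul_le_mul_of_nonneg_right hγc hz)
end
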